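/- Let γ : ℝ → ℝ^D be a smooth (C^∞) curve parametrized by arc length, i.e. ‖γ'(t)‖ = 1 for all t, set x = γ(0), and let n be a unit vector with ⟨n, γ'(0)⟩ = 0 such that γ''(0) = κ_y · n for some κ_y ∈ ℝ. Fix κ₀ > 0, let r = 1/κ₀ and c = x + r n. If |κ_y − κ₀| ≤ δ for some δ ≥ 0, then there exist constants C > 0 and ε > 0 such that for all s ∈ (0, ε), | r·arccos( ⟨x − c, γ(s) − c⟩ / (r ‖γ(s) − c‖) ) − s | ≤ (1/6) δ (δ + κ₀) s³ + C s⁴. -/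

import Mathlib

open RealInnerProductSpace

/-!
Split `γ s - γ 0` into its component `⟪n, γ s - γ 0⟫` along `n` and its projection `w s` to the
hyperplane `nᗮ`. The angle at `c` between `γ 0` and `γ s` is the arctangent of
`‖w s‖ / (r - ⟪n, γ s - γ 0⟫)`. Here `⟪n, γ s - γ 0⟫ = κ s² / 2 + O(s³)`. For the numerator,
`w s = s γ'(0) + O(s³)` differs from a multiple of the unit vector `γ'(0)` only at third order, so
its norm agrees with `⟪γ'(0), w s⟫ = ⟪γ'(0), γ s - γ 0⟫` up to `O(s⁵)`; differentiating `‖γ'‖ = 1`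
twice gives `⟪γ'(0), γ'''(0)⟫ = -κ²`, so `‖w s‖ = s - κ² s³ / 6 + O(s⁴)`. Expanding the quotient
and the arctangent, the estimate equals `s - (κ - κ₀) (κ - 2 κ₀) s³ / 6 + O(s⁴)`, and
`|κ - 2 κ₀| ≤ |κ - κ₀| + κ₀`.
-/

section

open Asymptotics Filter InnerProductGeometry Topology

theorem isBigO_sub_taylor_of_contDiffAt {E : Type*} [NormedAddCommGroup E] [NormedSpace ℝ E]
    {f : ℝ → E} {x₀ : ℝ} {n : ℕ} (hf : ContDiffAt ℝ n f x₀) :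
    (fun x ↦ f x - ∑ k ∈ Finset.range n,
      ((k.factorial : ℝ)⁻¹ * (x - x₀) ^ k) • iteratedDeriv k f x₀)
      =O[𝓝 x₀] fun x ↦ (x - x₀) ^ n := by
  obtain ⟨u, hu, hfu⟩ := hf.contDiffOn le_rfl (by simp)
  obtain ⟨ρ, hρ, hball⟩ := Metric.mem_nhds_iff.1 (by simpa using hu)
  have hx₀ : x₀ ∈ Metric.ball x₀ ρ := Metric.mem_ball_self hρ
  have hlittle := taylor_isLittleO (convex_ball x₀ ρ) hx₀ (hfu.mono hball)
  rw [Metric.isOpen_ball.nhdsWithin_eq hx₀] at hlittle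
  have hlast : (fun x ↦ ((n.factorial : ℝ)⁻¹ * (x - x₀) ^ n) • iteratedDeriv n f x₀)
      =O[𝓝 x₀] fun x ↦ (x - x₀) ^ n :=
    isBigO_of_le' (c := ‖(n.factorial : ℝ)⁻¹‖ * ‖iteratedDeriv n f x₀‖) _ fun x ↦ by
      rw [norm_smul, norm_mul, mul_right_comm]
  refine (hlittle.isBigO.add hlast).congr_left fun x ↦ ?_
  simp only [taylor_within_apply, Finset.sum_range_succ,
    iteratedDerivWithin_of_isOpen Metric.isOpen_ball hx₀]
  abel

theorem isBigO_sub_taylor_two {E : Type*} [NormedAddCommGroup E] [NormedSpace ℝ E] {f : ℝ → E}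
    (hf : ContDiffAt ℝ 3 f 0) :
    (fun s ↦ f s - f 0 - (s • deriv f 0 + (s ^ 2 / 2) • deriv (deriv f) 0)) =O[𝓝 0] (· ^ 3) := by
  refine (isBigO_sub_taylor_of_contDiffAt (n := 3) (by exact_mod_cast hf)).congr
    (fun s ↦ ?_) fun s ↦ by rw [sub_zero]
  simp only [Finset.sum_range_succ, Finset.sum_range_zero, Nat.factorial, iteratedDeriv_succ,
    iteratedDeriv_zero, sub_zero]
  module

theorem isBigO_sub_taylor_three {E : Type*} [NormedAddCommGroup E] [NormedSpace ℝ E] {f : ℝ → E}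
    (hf : ContDiffAt ℝ 4 f 0) :
    (fun s ↦ f s - f 0 - (s • deriv f 0 + (s ^ 2 / 2) • deriv (deriv f) 0
      + (s ^ 3 / 6) • deriv (deriv (deriv f)) 0)) =O[𝓝 0] (· ^ 4) := by
  refine (isBigO_sub_taylor_of_contDiffAt (n := 4) (by exact_mod_cast hf)).congr
    (fun s ↦ ?_) fun s ↦ by rw [sub_zero]
  simp only [Finset.sum_range_succ, Finset.sum_range_zero, Nat.factorial, iteratedDeriv_succ,
    iteratedDeriv_zero, sub_zero]
  module

theorem isBigO_pow_mul_of_continuousAt {g : ℝ → ℝ} (hg : ContinuousAt g 0) (k : ℕ) :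
    (fun s ↦ s ^ k * g s) =O[𝓝 0] (· ^ k) := by
  simpa using (isBigO_refl (fun s : ℝ ↦ s ^ k) (𝓝 0)).mul (hg.isBigO_one ℝ)

theorem lipschitzWith_arctan : LipschitzWith 1 Real.arctan :=
  lipschitzWith_of_nnnorm_deriv_le Real.differentiable_arctan fun x ↦ by
    rw [← NNReal.coe_le_coe, coe_nnnorm, Real.deriv_arctan, Real.norm_of_nonneg (by positivity)]
    exact div_le_self zero_le_one (by linarith [sq_nonneg x])

theorem abs_arctan_sub_cubic_le (t : ℝ) : |Real.arctan t - (t - t ^ 3 / 3)| ≤ |t| ^ 5 := by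
  have hderiv (y : ℝ) : HasDerivAt (fun y ↦ Real.arctan y - (y - y ^ 3 / 3))
      (y ^ 4 / (1 + y ^ 2)) y := by
    convert! (Real.hasDerivAt_arctan y).sub
      ((hasDerivAt_id y).sub ((hasDerivAt_pow 3 y).div_const 3)) using 1
    field_simp
    ring
  have hbound : ∀ y ∈ Set.uIcc 0 t, ‖y ^ 4 / (1 + y ^ 2)‖ ≤ |t| ^ 4 := fun y hy ↦ by
    have hyt : |y| ≤ |t| := by simpa using Set.abs_sub_left_of_mem_uIcc hy
    calc ‖y ^ 4 / (1 + y ^ 2)‖ = y ^ 4 / (1 + y ^ 2) := Real.norm_of_nonneg (by positivity)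
      _ ≤ y ^ 4 := div_le_self (by positivity) (by linarith [sq_nonneg y])
      _ = |y| ^ 4 := (Even.pow_abs (by decide) y).symm
      _ ≤ |t| ^ 4 := by gcongr
  have hmvt := (convex_uIcc 0 t).norm_image_sub_le_of_norm_hasDerivWithin_le
    (fun y _ ↦ (hderiv y).hasDerivWithinAt) hbound Set.left_mem_uIcc Set.right_mem_uIcc
  simpa [← pow_succ] using hmvt

variable {l : Filter ℝ}

theorem isBigO_div_sub_cubic (hl : l ≤ 𝓝 0) {P A : ℝ → ℝ} {a p r b : ℝ} (hr : r ≠ 0)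
    (hP : (fun s ↦ P s - (a * s + p * s ^ 3)) =O[l] (· ^ 4))
    (hA : (fun s ↦ A s - (r + b * s ^ 2)) =O[l] (· ^ 3)) :
    (fun s ↦ P s / A s - (a / r * s + (p / r - a * b / r ^ 2) * s ^ 3)) =O[l] (· ^ 4) := by
  set m := p / r - a * b / r ^ 2 with hm
  have hA_tendsto : Tendsto A l (𝓝 r) := by
    have hpow : Tendsto (fun s : ℝ ↦ s ^ 3) l (𝓝 0) :=
      (Continuous.tendsto' (by fun_prop) 0 0 (by simp)).mono_left hl
    have hmodel : Tendsto (fun s : ℝ ↦ r + b * s ^ 2) l (𝓝 r) :=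
      (Continuous.tendsto' (by fun_prop) 0 r (by simp)).mono_left hl
    simpa using (hA.trans_tendsto hpow).add hmodel
  have hquot : (fun s ↦ a / r * s + m * s ^ 3) =O[l] (· ^ 1) :=
    ((isBigO_pow_mul_of_continuousAt (g := fun s ↦ a / r + m * s ^ 2)
      (by fun_prop) 1).mono hl).congr_left fun s ↦ by ring
  have hnum : (fun s ↦ P s - (a / r * s + m * s ^ 3) * A s) =O[l] (· ^ 4) := by
    have hmodel := (isBigO_pow_mul_of_continuousAt (g := fun s ↦ -(m * b * s))
      (by fun_prop) 4).mono hl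
    have hcross := (hquot.mul hA).congr_right fun s ↦ (pow_add s 1 3).symm
    refine ((hP.sub hcross).add hmodel).congr_left fun s ↦ ?_
    rw [hm]
    field_simp
    ring
  have hinv : (fun s ↦ (A s)⁻¹) =O[l] fun _ ↦ (1 : ℝ) := (hA_tendsto.inv₀ hr).isBigO_one ℝ
  refine (hnum.mul hinv).congr' ?_ (.of_eq (by simp))
  filter_upwards [hA_tendsto.eventually_ne hr] with s hs
  field_simp

theorem isBigO_arctan_sub_cubic (hl : l ≤ 𝓝 0) {f : ℝ → ℝ} {a b : ℝ}
    (hf : (fun s ↦ f s - (a * s + b * s ^ 3)) =O[l] (· ^ 4)) :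
    (fun s ↦ Real.arctan (f s) - (a * s + (b - a ^ 3 / 3) * s ^ 3)) =O[l] (· ^ 4) := by
  have hlip : (fun s ↦ Real.arctan (f s) - Real.arctan (a * s + b * s ^ 3)) =O[l] (· ^ 4) :=
    (isBigO_of_le l fun s ↦ by
      simpa using lipschitzWith_arctan.norm_sub_le (f s) (a * s + b * s ^ 3)).trans hf
  have hcubic : (fun s ↦ Real.arctan (a * s + b * s ^ 3)
      - ((a * s + b * s ^ 3) - (a * s + b * s ^ 3) ^ 3 / 3)) =O[l] (· ^ 4) := by
    have hquintic := (isBigO_pow_mul_of_continuousAt (g := fun s ↦ s * (a + b * s ^ 2) ^ 5)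
      (by fun_prop) 4).mono hl
    refine (isBigO_of_le l fun s ↦ ?_).trans hquintic
    rw [show s ^ 4 * (s * (a + b * s ^ 2) ^ 5) = (a * s + b * s ^ 3) ^ 5 by ring, norm_pow]
    exact abs_arctan_sub_cubic_le _
  have hcube := (isBigO_pow_mul_of_continuousAt
    (g := fun s ↦ -(s * (a ^ 2 * b + a * b ^ 2 * s ^ 2 + b ^ 3 * s ^ 4 / 3)))
    (by fun_prop) 4).mono hl
  exact ((hlip.add hcubic).add hcube).congr_left fun s ↦ by ring

variable {E : Type*} [NormedAddCommGroup E] [InnerProductSpace ℝ E]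

theorem abs_norm_sub_inner_le {T : E} (hT : ‖T‖ = 1) {s : ℝ} (hs : 0 < s) (w : E) :
    |‖w‖ - ⟪T, w⟫| ≤ ‖w - s • T‖ ^ 2 / (2 * s) := by
  have hlower : ⟪T, w⟫ ≤ ‖w‖ := by simpa [hT] using real_inner_le_norm T w
  have hsq : ‖w - s • T‖ ^ 2 = ‖w‖ ^ 2 - 2 * s * ⟪T, w⟫ + s ^ 2 := by
    rw [norm_sub_sq_real, norm_smul, hT, inner_smul_right, real_inner_comm, Real.norm_eq_abs,
      mul_one, sq_abs]
    ring
  rw [abs_of_nonneg (sub_nonneg.2 hlower), le_div_iff₀ (by positivity), hsq]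
  linarith [sq_nonneg (‖w‖ - s)]

/-- The spherical distance estimate: the great-circle distance, on the sphere with center `c`
through `x`, between `x` and the radial projection of `y` to that sphere. It is encoded as the
radius times the angle that `x` and `y` subtend at `c`. -/
noncomputable def sphericalDist (c x y : E) : ℝ :=
  ‖x - c‖ * angle (x - c) (y - c)

theorem angle_smul_sub_eq_arctan {n v : E} (hn : ‖n‖ = 1) {r : ℝ} (hr : ⟪n, v⟫ < r) :
    angle n (r • n - v)
      = Real.arctan (‖(ℝ ∙ n)ᗮ.starProjection v‖ / (r - ⟪n, v⟫)) := by
  have hpos : 0 < r - ⟪n, v⟫ := sub_pos.2 hr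
  have hn0 : n ≠ 0 := norm_ne_zero_iff.1 (by simp [hn])
  have hdecomp : r • n - v = (r - ⟪n, v⟫) • n - (ℝ ∙ n)ᗮ.starProjection v := by
    rw [Submodule.starProjection_orthogonal_val, Submodule.starProjection_unit_singleton ℝ hn]
    module
  have horth : ⟪(r - ⟪n, v⟫) • n, (ℝ ∙ n)ᗮ.starProjection v⟫ = 0 := by
    rw [real_inner_smul_left, Submodule.mem_orthogonal_singleton_iff_inner_right.1
      (Submodule.starProjection_apply_mem _ v), mul_zero]
  rw [← angle_smul_left_of_pos n _ hpos, hdecomp,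
    angle_sub_eq_arctan_of_inner_eq_zero horth (smul_ne_zero hpos.ne' hn0), norm_smul, hn,
    mul_one, Real.norm_of_nonneg hpos.le]

theorem sphericalDist_add_smul {n : E} (hn : ‖n‖ = 1) {r : ℝ} (hr : 0 < r) {x y : E}
    (hy : ⟪n, y - x⟫ < r) :
    sphericalDist (x + r • n) x y
      = r * Real.arctan (‖(ℝ ∙ n)ᗮ.starProjection (y - x)‖ / (r - ⟪n, y - x⟫)) := by
  have hx : x - (x + r • n) = -(r • n) := by abel
  have hyc : y - (x + r • n) = -(r • n - (y - x)) := by abel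
  rw [sphericalDist, hx, hyc, angle_neg_neg, angle_smul_left_of_pos _ _ hr,
    angle_smul_sub_eq_arctan hn hy, norm_neg, norm_smul, hn, mul_one, Real.norm_of_nonneg hr.le]

theorem inner_deriv_eq_zero_of_norm_eq {f : ℝ → E} {t ρ : ℝ} (hf : DifferentiableAt ℝ f t)
    (hρ : ∀ᶠ u in 𝓝 t, ‖f u‖ = ρ) : ⟪f t, deriv f t⟫ = 0 := by
  have hconst : (‖f ·‖ ^ 2) =ᶠ[𝓝 t] fun _ ↦ ρ ^ 2 := hρ.mono fun u hu ↦ by simp [hu]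
  have hderiv : 2 * ⟪f t, deriv f t⟫ = 0 :=
    hf.hasDerivAt.norm_sq.unique ((hasDerivAt_const t _).congr_of_eventuallyEq hconst)
  linarith

theorem inner_deriv_deriv_of_norm_eq {f : ℝ → E} {t ρ : ℝ} (hf : ContDiffAt ℝ 2 f t)
    (hρ : ∀ᶠ u in 𝓝 t, ‖f u‖ = ρ) : ⟪f t, deriv (deriv f) t⟫ = -‖deriv f t‖ ^ 2 := by
  have hzero : (fun u ↦ ⟪f u, deriv f u⟫) =ᶠ[𝓝 t] fun _ ↦ 0 := by
    filter_upwards [hρ.eventually_nhds, hf.eventually (by simp)] with u hu hfu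
    exact inner_deriv_eq_zero_of_norm_eq (hfu.differentiableAt (by simp)) hu
  have hf' : DifferentiableAt ℝ (deriv f) t :=
    (hf.derivWithin (m := 1) (by norm_num)).differentiableAt (by simp)
  have hderiv : ⟪f t, deriv (deriv f) t⟫ + ⟪deriv f t, deriv f t⟫ = 0 :=
    ((hf.differentiableAt (by simp)).hasDerivAt.inner ℝ hf'.hasDerivAt).unique
      ((hasDerivAt_const t 0).congr_of_eventuallyEq hzero)
  rw [real_inner_self_eq_norm_sq] at hderiv
  linarith

variable {γ : ℝ → E} {n : E} {κ : ℝ}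

theorem isBigO_inner_normal_sub (hγ : ContDiffAt ℝ 3 γ 0) (hn : ‖n‖ = 1)
    (hperp : ⟪n, deriv γ 0⟫ = 0) (hκ : deriv (deriv γ) 0 = κ • n) :
    (fun s ↦ ⟪n, γ s - γ 0⟫ - κ / 2 * s ^ 2) =O[𝓝 0] (· ^ 3) := by
  refine (((innerSL ℝ n).isBigO_comp _ _).trans
    (isBigO_sub_taylor_two hγ)).congr_left fun s ↦ ?_
  simp only [hκ, innerSL_apply_apply, inner_sub_right, inner_add_right, inner_smul_right, hperp,
    real_inner_self_eq_norm_sq, hn]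
  ring

theorem isBigO_inner_tangent_sub (hγ : ContDiffAt ℝ 4 γ 0)
    (hunit : ∀ᶠ t in 𝓝 0, ‖deriv γ t‖ = 1) :
    (fun s ↦ ⟪deriv γ 0, γ s - γ 0⟫ - (s - ‖deriv (deriv γ) 0‖ ^ 2 / 6 * s ^ 3))
      =O[𝓝 0] (· ^ 4) := by
  have hγ' : ContDiffAt ℝ 3 (deriv γ) 0 := hγ.derivWithin (by norm_num)
  have hone : ⟪deriv γ 0, deriv γ 0⟫ = 1 := by simp [hunit.self_of_nhds]
  have hzero : ⟪deriv γ 0, deriv (deriv γ) 0⟫ = 0 :=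
    inner_deriv_eq_zero_of_norm_eq (hγ'.differentiableAt (by simp)) hunit
  have hthird := inner_deriv_deriv_of_norm_eq (hγ'.of_le (by norm_num)) hunit
  refine (((innerSL ℝ (deriv γ 0)).isBigO_comp _ _).trans
    (isBigO_sub_taylor_three hγ)).congr_left fun s ↦ ?_
  rw [innerSL_apply_apply, inner_sub_right]
  simp only [inner_add_right, inner_smul_right, hone, hzero, hthird]
  ring

theorem isBigO_starProjection_orthogonal_sub (hγ : ContDiffAt ℝ 3 γ 0)
    (hperp : ⟪n, deriv γ 0⟫ = 0) (hκ : deriv (deriv γ) 0 = κ • n) :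
    (fun s ↦ (ℝ ∙ n)ᗮ.starProjection (γ s - γ 0) - s • deriv γ 0) =O[𝓝 0] (· ^ 3) := by
  have hT : (ℝ ∙ n)ᗮ.starProjection (deriv γ 0) = deriv γ 0 :=
    Submodule.starProjection_eq_self_iff.2
      (Submodule.mem_orthogonal_singleton_iff_inner_right.2 hperp)
  refine (((ℝ ∙ n)ᗮ.starProjection.isBigO_comp _ _).trans
    (isBigO_sub_taylor_two hγ)).congr_left fun s ↦ ?_
  simp only [hκ, map_sub, map_add, map_smul, hT,
    Submodule.starProjection_orthogonalComplement_singleton_eq_zero, smul_zero, add_zero]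

theorem isBigO_norm_starProjection_orthogonal_sub (hγ : ContDiffAt ℝ 4 γ 0)
    (hunit : ∀ᶠ t in 𝓝 0, ‖deriv γ t‖ = 1) (hn : ‖n‖ = 1)
    (hperp : ⟪n, deriv γ 0⟫ = 0) (hκ : deriv (deriv γ) 0 = κ • n) :
    (fun s ↦ ‖(ℝ ∙ n)ᗮ.starProjection (γ s - γ 0)‖ - (s - κ ^ 2 / 6 * s ^ 3))
      =O[𝓝[>] 0] (· ^ 4) := by
  set w : ℝ → E := fun s ↦ (ℝ ∙ n)ᗮ.starProjection (γ s - γ 0)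
  have hwT (s : ℝ) : ⟪deriv γ 0, w s⟫ = ⟪deriv γ 0, γ s - γ 0⟫ := by
    rw [← Submodule.inner_starProjection_left_eq_right, Submodule.starProjection_eq_self_iff.2
      (Submodule.mem_orthogonal_singleton_iff_inner_right.2 hperp)]
  have hdefect : (fun s ↦ ‖w s‖ - ⟪deriv γ 0, w s⟫) =O[𝓝[>] 0] (· ^ 4) := by
    have hsq : (fun s ↦ ‖w s - s • deriv γ 0‖ ^ 2 * (2 * s)⁻¹)
        =O[𝓝[>] 0] fun s ↦ (s ^ 3) ^ 2 * (2 * s)⁻¹ :=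
      (((isBigO_starProjection_orthogonal_sub (hγ.of_le (by norm_num)) hperp hκ).mono
        nhdsWithin_le_nhds).norm_left.pow 2).mul (isBigO_refl _ _)
    have hpow : (fun s : ℝ ↦ (s ^ 3) ^ 2 * (2 * s)⁻¹) =O[𝓝[>] 0] (· ^ 4) := by
      refine ((isBigO_pow_mul_of_continuousAt (g := fun s ↦ s / 2) (by fun_prop) 4).mono
        nhdsWithin_le_nhds).congr' ?_ .rfl
      filter_upwards [self_mem_nhdsWithin] with s (hs : 0 < s)
      field_simp
    refine (IsBigO.of_bound' ?_).trans (hsq.trans hpow)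
    filter_upwards [self_mem_nhdsWithin] with s hs
    exact (abs_norm_sub_inner_le hunit.self_of_nhds hs (w s)).trans (le_abs_self _)
  refine (hdefect.add ((isBigO_inner_tangent_sub hγ hunit).mono
    nhdsWithin_le_nhds)).congr_left fun s ↦ ?_
  rw [hwT, hκ, norm_smul, hn, mul_one, Real.norm_eq_abs, sq_abs]
  ring

theorem isBigO_sphericalDist_sub_cubic (hγ : ContDiffAt ℝ 4 γ 0)
    (hunit : ∀ᶠ t in 𝓝 0, ‖deriv γ t‖ = 1) (hn : ‖n‖ = 1)
    (hperp : ⟪n, deriv γ 0⟫ = 0) (hκ : deriv (deriv γ) 0 = κ • n) {r : ℝ} (hr : 0 < r) :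
    (fun s ↦ sphericalDist (γ 0 + r • n) (γ 0) (γ s)
      - (s - (κ - r⁻¹) * (κ - 2 * r⁻¹) / 6 * s ^ 3)) =O[𝓝[>] 0] (· ^ 4) := by
  have hP := (isBigO_norm_starProjection_orthogonal_sub hγ hunit hn hperp hκ).congr_left
    (f₂ := fun s ↦ _ - (1 * s + (-(κ ^ 2 / 6)) * s ^ 3)) fun s ↦ by ring
  have hA : (fun s ↦ r - ⟪n, γ s - γ 0⟫ - (r + -(κ / 2) * s ^ 2)) =O[𝓝[>] 0] (· ^ 3) :=
    ((isBigO_inner_normal_sub (hγ.of_le (by norm_num)) hn hperp hκ).neg_left.mono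
      nhdsWithin_le_nhds).congr_left fun s ↦ by ring
  have harctan := isBigO_arctan_sub_cubic nhdsWithin_le_nhds
    (isBigO_div_sub_cubic nhdsWithin_le_nhds hr.ne' hP hA)
  have hlt : ∀ᶠ s in 𝓝[>] 0, ⟪n, γ s - γ 0⟫ < r := by
    have hcont : ContinuousAt (fun s ↦ ⟪n, γ s - γ 0⟫) 0 :=
      continuousAt_const.inner (hγ.continuousAt.sub continuousAt_const)
    exact nhdsWithin_le_nhds (hcont.eventually_lt_const (by simpa using hr))
  refine (harctan.const_mul_left r).congr' ?_ .rfl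
  filter_upwards [hlt] with s hs
  rw [sphericalDist_add_smul hn hr hs]
  field_simp
  ring

theorem abs_cubic_coeff_le {κ κ₀ δ : ℝ} (hκ₀ : 0 ≤ κ₀) (h : |κ - κ₀| ≤ δ) :
    |(κ - κ₀) * (κ - 2 * κ₀) / 6| ≤ 1 / 6 * δ * (δ + κ₀) := by
  have h₂ : |κ - 2 * κ₀| ≤ δ + κ₀ := by
    calc |κ - 2 * κ₀| = |(κ - κ₀) - κ₀| := by ring_nf
      _ ≤ |κ - κ₀| + |κ₀| := abs_sub _ _
      _ ≤ δ + κ₀ := add_le_add h (abs_of_nonneg hκ₀).le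
  have hδ : 0 ≤ δ := (abs_nonneg _).trans h
  rw [abs_div, abs_mul, abs_of_pos (by norm_num : (0 : ℝ) < 6)]
  linarith [mul_le_mul h h₂ (abs_nonneg _) hδ]

theorem exists_forall_Ioo_abs_le_of_isBigO {f : ℝ → ℝ} {k : ℕ}
    (hf : f =O[𝓝[>] 0] (· ^ k)) :
    ∃ C > (0 : ℝ), ∃ ε > (0 : ℝ), ∀ s ∈ Set.Ioo (0 : ℝ) ε, |f s| ≤ C * s ^ k := by
  obtain ⟨C, hC, hbound⟩ := hf.exists_pos
  obtain ⟨ε, hε, hsub⟩ := mem_nhdsGT_iff_exists_Ioo_subset.1 hbound.bound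
  refine ⟨C, hC, ε, hε, fun s hs ↦ ?_⟩
  simpa [abs_of_pos hs.1] using hsub hs

theorem stmt_5_general (hγ : ContDiffAt ℝ 4 γ 0) (hunit : ∀ᶠ t in 𝓝 0, ‖deriv γ t‖ = 1)
    (hn : ‖n‖ = 1) (hperp : ⟪n, deriv γ 0⟫ = 0) (hκ : deriv (deriv γ) 0 = κ • n)
    {κ₀ : ℝ} (hκ₀ : 0 < κ₀) {r : ℝ} (hr : r = 1 / κ₀) {c : E} (hc : c = γ 0 + r • n)
    {δ : ℝ} (hclose : |κ - κ₀| ≤ δ) :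
    ∃ C > (0 : ℝ), ∃ ε > (0 : ℝ), ∀ s ∈ Set.Ioo (0 : ℝ) ε,
      |r * Real.arccos (⟪γ 0 - c, γ s - c⟫ / (r * ‖γ s - c‖)) - s|
        ≤ (1 / 6) * δ * (δ + κ₀) * s ^ 3 + C * s ^ 4 := by
  have hr₀ : 0 < r := hr ▸ one_div_pos.2 hκ₀
  have hradius : ‖γ 0 - c‖ = r := by simp [hc, norm_smul, hn, abs_of_pos hr₀]
  have hdist (s : ℝ) : r * Real.arccos (⟪γ 0 - c, γ s - c⟫ / (r * ‖γ s - c‖))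
      = sphericalDist c (γ 0) (γ s) := by rw [sphericalDist, angle, hradius]
  obtain ⟨C, hC, ε, hε, hbound⟩ := exists_forall_Ioo_abs_le_of_isBigO
    (isBigO_sphericalDist_sub_cubic hγ hunit hn hperp hκ hr₀)
  rw [← hc, show r⁻¹ = κ₀ by simp [hr]] at hbound
  refine ⟨C, hC, ε, hε, fun s hs ↦ ?_⟩
  set a := (κ - κ₀) * (κ - 2 * κ₀) / 6
  have hcubic : |a * s ^ 3| ≤ 1 / 6 * δ * (δ + κ₀) * s ^ 3 := by
    rw [abs_mul, abs_of_pos (pow_pos hs.1 3)]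
    exact mul_le_mul_of_nonneg_right (abs_cubic_coeff_le hκ₀.le hclose) (pow_pos hs.1 3).le
  calc |r * Real.arccos (⟪γ 0 - c, γ s - c⟫ / (r * ‖γ s - c‖)) - s|
      = |-(a * s ^ 3) + (sphericalDist c (γ 0) (γ s) - (s - a * s ^ 3))| := by
        rw [hdist]; ring_nf
    _ ≤ |-(a * s ^ 3)| + |sphericalDist c (γ 0) (γ s) - (s - a * s ^ 3)| := abs_add_le _ _
    _ ≤ _ := add_le_add ((abs_neg _).trans_le hcubic) (hbound s hs)

end

/-- Part (2) of Corollary 1 of the paper (quantitative form): if the curvature `κ_y`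
of the unit-speed curve `γ` at `x = γ(0)` (in the normal direction `n`) is within
`δ` of the sphere curvature `κ₀ = 1/r`, then the spherical distance estimate has
third-order error at most `(1/6)δ(δ + κ₀)s³` plus a fourth-order remainder. -/
theorem stmt_5 {D : ℕ} (γ : ℝ → EuclideanSpace ℝ (Fin D))
    (hγ : ContDiff ℝ (⊤ : ℕ∞) γ)
    (hunit : ∀ t : ℝ, ‖deriv γ t‖ = 1)
    (x : EuclideanSpace ℝ (Fin D)) (hx : x = γ 0)
    (n : EuclideanSpace ℝ (Fin D)) (hn : ‖n‖ = 1)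
    (hperp : ⟪n, deriv γ 0⟫ = 0)
    (κy : ℝ) (hκy : deriv (deriv γ) 0 = κy • n)
    (κ₀ : ℝ) (hκ₀ : 0 < κ₀)
    (r : ℝ) (hr : r = 1 / κ₀)
    (c : EuclideanSpace ℝ (Fin D)) (hc : c = x + r • n)
    (δ : ℝ) (hδ : 0 ≤ δ) (hclose : |κy - κ₀| ≤ δ) :
    ∃ C > (0 : ℝ), ∃ ε > (0 : ℝ), ∀ s ∈ Set.Ioo (0 : ℝ) ε,
      |r * Real.arccos (⟪x - c, γ s - c⟫ / (r * ‖γ s - c‖)) - s|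
        ≤ (1 / 6) * δ * (δ + κ₀) * s ^ 3 + C * s ^ 4 := by
  subst hx
  exact stmt_5_general (contDiff_infty.1 hγ 4).contDiffAt (.of_forall hunit) hn hperp
    hκy hκ₀ hr hc hclose
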